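/- Let l, k be coprime integers with 1 ≤ l < k and k ≥ 2. There exist k step-function probability measures μ_1, ..., μ_k on [0,1] with the following property: for every natural number t, if A ⊆ [0,1] can be written as a union of t intervals and μ_i(A) = l/k for every i ∈ {1, ..., k}, then t ≥ k − 1. -/

import Mathlib

/-!
Put `p = k - 1` and choose `m, q ≥ 1` with `l * m + 1 = q * k`, which is possible since `l` and `k`
are coprime. Divide `[0,1)` into `2 m p` cells of equal length. Odd cells carry the
measure `μ_p`, each with mass `1 / (m p)`; the even cells `2 s` are given cyclically to
`μ_0, …, μ_{p-1}` according to `s mod p`, so each of these measures has `m` cells of mass `1 / m`.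

Let `A` be a union of `t` intervals with all measures equal to `l / k`.
* Each `μ_i` with `i < p` has at most `l m / k < q`, hence at most `q - 1`, of its cells contained
  in `A` (`card_subset_le`). So at most `(q - 1) p` even cells are contained in `A`.
* At least `m p l / k` odd cells meet `A` (`le_card_meet`).
* If the odd cell `2 s + 1` meets `A` while the even cell `2 s` is not contained in `A`, choose an
  interval through a point of the odd cell. Different `s` get different intervals: an
  interval meeting the odd cells of `s < s'` contains the even cell of `s'`. So the number of odd
  cells meeting `A` is at most `t` plus the number of even cells contained in `A`
  (`card_meet_le`).

Together `p (q k - 1) ≤ k ((q - 1) p + t)`, that is `(k - 1)² ≤ k t`, whence `t ≥ k - 1`.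
-/

open MeasureTheory
open scoped ENNReal

/-- A step-function probability measure on `[0,1]`: a Borel probability measure on `ℝ`
that is absolutely continuous w.r.t. Lebesgue measure with a piecewise constant density
supported in `[0,1]`. -/
def IsStepMeasure (μ : Measure ℝ) : Prop :=
  IsProbabilityMeasure μ ∧
  ∃ (n : ℕ) (a b : Fin n → ℝ) (c : Fin n → ℝ≥0∞),
    (∀ i, 0 ≤ a i ∧ b i ≤ 1) ∧
    μ = volume.withDensity
      (fun x => ∑ i, Set.indicator (Set.Ico (a i) (b i)) (fun _ => c i) x)

/-- The `j`-th of the `M` half-open cells of equal length dividing `[0,1)`. -/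
def cell (M j : ℕ) : Set ℝ := Set.Ico ((j : ℝ) / M) (((j : ℝ) + 1) / M)

/-- The measure giving mass `1 / n`, spread uniformly, to each of the cells `e r`, `r : Fin n`
(counted with multiplicity), of the subdivision of `[0,1)` into `M` cells. -/
noncomputable def cellMeasure (M n : ℕ) (e : Fin n → ℕ) : Measure ℝ :=
  volume.withDensity (fun x => ∑ r,
    Set.indicator (Set.Ico ((e r : ℝ) / M) (((e r : ℝ) + 1) / M))
      (fun _ => ENNReal.ofReal ((M : ℝ) / n)) x)

lemma cellMeasure_apply (M n : ℕ) (e : Fin n → ℕ) {S : Set ℝ} (hS : MeasurableSet S) :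
    cellMeasure M n e S = ∑ r, ENNReal.ofReal ((M : ℝ) / n) * volume (S ∩ cell M (e r)) := by
  rw [cellMeasure, withDensity_apply _ hS, lintegral_finsetSum]
  · refine Finset.sum_congr rfl fun r _ => ?_
    rw [lintegral_indicator measurableSet_Ico, setLIntegral_const,
      Measure.restrict_apply measurableSet_Ico, Set.inter_comm, cell]
  · intro r _
    exact measurable_const.indicator measurableSet_Ico

lemma density_mul_volume_cell {M n : ℕ} (hM : 0 < M) (j : ℕ) :
    ENNReal.ofReal ((M : ℝ) / n) * volume (cell M j) = ENNReal.ofReal (1 / (n : ℝ)) := by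
  have hM' : (M : ℝ) ≠ 0 := by positivity
  rw [cell, Real.volume_Ico, ← ENNReal.ofReal_mul (by positivity)]
  congr 1
  field_simp
  ring

lemma isStepMeasure_cellMeasure {M n : ℕ} (hM : 0 < M) (hn : 0 < n) (e : Fin n → ℕ)
    (he : ∀ r, e r < M) : IsStepMeasure (cellMeasure M n e) := by
  have hM' : (0 : ℝ) < M := by positivity
  have hn' : (n : ℝ) ≠ 0 := by positivity
  refine ⟨⟨?_⟩, n, fun r => (e r : ℝ) / M, fun r => ((e r : ℝ) + 1) / M,
    fun _ => ENNReal.ofReal ((M : ℝ) / n), fun r => ⟨by positivity, ?_⟩, rfl⟩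
  · rw [cellMeasure_apply M n e MeasurableSet.univ]
    simp only [Set.univ_inter, density_mul_volume_cell hM, Finset.sum_const, Finset.card_univ,
      Fintype.card_fin]
    rw [← ENNReal.ofReal_nsmul, nsmul_eq_mul, mul_one_div_cancel hn', ENNReal.ofReal_one]
  · rw [div_le_one hM']
    exact_mod_cast he r

open Classical in
lemma card_subset_le {M n : ℕ} (hM : 0 < M) (hn : 0 < n) (e : Fin n → ℕ) {S : Set ℝ}
    (hS : MeasurableSet S) {c : ℝ} (hc : 0 ≤ c) (h : cellMeasure M n e S = ENNReal.ofReal c) :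
    ((∑ r, if cell M (e r) ⊆ S then 1 else 0 : ℕ) : ℝ) ≤ n * c := by
  have hn' : (0 : ℝ) < n := by positivity
  have key : ENNReal.ofReal (∑ r : Fin n, if cell M (e r) ⊆ S then 1 / (n : ℝ) else 0)
      ≤ ENNReal.ofReal c := by
    rw [← h, cellMeasure_apply M n e hS,
      ENNReal.ofReal_sum_of_nonneg (fun r _ => by split_ifs <;> positivity)]
    refine Finset.sum_le_sum fun r _ => ?_
    split_ifs with hr
    · rw [Set.inter_eq_right.2 hr, density_mul_volume_cell hM]
    · simp
  rw [ENNReal.ofReal_le_ofReal_iff hc] at key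
  have := mul_le_mul_of_nonneg_left key hn'.le
  rw [Finset.mul_sum] at this
  refine le_trans (le_of_eq ?_) this
  push_cast
  refine Finset.sum_congr rfl fun r _ => ?_
  split_ifs
  · field_simp
  · simp

open Classical in
lemma le_card_meet {M n : ℕ} (hM : 0 < M) (hn : 0 < n) (e : Fin n → ℕ) {S : Set ℝ}
    (hS : MeasurableSet S) {c : ℝ} (h : cellMeasure M n e S = ENNReal.ofReal c) :
    n * c ≤ ((∑ r, if (S ∩ cell M (e r)).Nonempty then 1 else 0 : ℕ) : ℝ) := by
  have hn' : (0 : ℝ) < n := by positivity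
  have hnn : ∀ r : Fin n, 0 ≤ if (S ∩ cell M (e r)).Nonempty then 1 / (n : ℝ) else 0 :=
    fun r => by split_ifs <;> positivity
  have key : ENNReal.ofReal c ≤
      ENNReal.ofReal (∑ r : Fin n, if (S ∩ cell M (e r)).Nonempty then 1 / (n : ℝ) else 0) := by
    rw [← h, cellMeasure_apply M n e hS, ENNReal.ofReal_sum_of_nonneg (fun r _ => hnn r)]
    refine Finset.sum_le_sum fun r _ => ?_
    split_ifs with hr
    · rw [← density_mul_volume_cell hM (e r)]
      gcongr
      exact Set.inter_subset_right
    · rw [Set.not_nonempty_iff_eq_empty.1 hr]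
      simp
  rw [ENNReal.ofReal_le_ofReal_iff (Finset.sum_nonneg fun r _ => hnn r)] at key
  have := mul_le_mul_of_nonneg_left key hn'.le
  rw [Finset.mul_sum] at this
  refine le_trans this (le_of_eq ?_)
  push_cast
  refine Finset.sum_congr rfl fun r _ => ?_
  split_ifs
  · field_simp
  · simp

/-- Points of cells `i < j` are separated by any cell strictly between, so an interval meeting
both contains it. -/
lemma cell_subset_of_ordConnected {M i j c : ℕ} {I : Set ℝ} (hI : I.OrdConnected)
    (hic : i < c) (hcj : c < j) {x y : ℝ} (hx : x ∈ I) (hy : y ∈ I)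
    (hxi : x ∈ cell M i) (hyj : y ∈ cell M j) : cell M c ⊆ I := by
  intro z hz
  refine hI.out hx hy ⟨?_, ?_⟩
  · refine hxi.2.le.trans (le_trans ?_ hz.1)
    gcongr
    exact_mod_cast hic
  · refine hz.2.le.trans (le_trans ?_ hyj.1)
    gcongr
    exact_mod_cast hcj

open Classical in
/-- A union of `t` intervals meets at most `t` more odd cells than it contains even cells: each
odd cell it meets whose left neighbour it does not contain is charged to an interval, and
no interval is charged twice. -/
lemma card_meet_le (M N t : ℕ) (I : Fin t → Set ℝ) (hI : ∀ j, (I j).OrdConnected) :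
    (∑ s : Fin N, if ((⋃ j, I j) ∩ cell M (2 * s + 1)).Nonempty then 1 else 0 : ℕ) ≤
      (∑ s : Fin N, if cell M (2 * s) ⊆ ⋃ j, I j then 1 else 0 : ℕ) + t := by
  simp only [← Finset.card_filter]
  set T := Finset.univ.filter fun s : Fin N => ((⋃ j, I j) ∩ cell M (2 * s + 1)).Nonempty
  set F := Finset.univ.filter fun s : Fin N => cell M (2 * s) ⊆ ⋃ j, I j
  have hex : ∀ s ∈ T \ F, ∃ j, (I j ∩ cell M (2 * s + 1)).Nonempty := by
    intro s hs
    obtain ⟨x, hx, hxc⟩ := (Finset.mem_filter.1 (Finset.mem_sdiff.1 hs).1).2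
    obtain ⟨j, hj⟩ := Set.mem_iUnion.1 hx
    exact ⟨j, x, hj, hxc⟩
  have hnot : ∀ s ∈ T \ F, ∀ j, ¬ cell M (2 * s) ⊆ I j := fun s hs j hsub =>
    (Finset.mem_sdiff.1 hs).2 (Finset.mem_filter.2
      ⟨Finset.mem_univ _, hsub.trans (Set.subset_iUnion I j)⟩)
  rcases Nat.eq_zero_or_pos t with rfl | ht
  · have hT : T \ F = ∅ := Finset.eq_empty_of_forall_notMem fun s hs => (hex s hs).choose.elim0
    have := Finset.le_card_sdiff F T
    rw [hT, Finset.card_empty] at this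
    omega
  have : Nonempty (Fin t) := ⟨⟨0, ht⟩⟩
  choose! g hg using hex
  have key : ∀ s ∈ T \ F, ∀ s' ∈ T \ F, g s = g s' → ¬ s < s' := by
    intro s hs s' hs' hgs hlt
    obtain ⟨x, hx, hxc⟩ := hg s hs
    obtain ⟨y, hy, hyc⟩ := hg s' hs'
    rw [hgs] at hx
    have hlt' : (s : ℕ) < s' := hlt
    exact hnot s' hs' (g s')
      (cell_subset_of_ordConnected (hI _) (by omega) (by omega) hx hy hxc hyc)
  have hinj : Set.InjOn g (T \ F : Finset (Fin N)) := by
    intro s hs s' hs' h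
    exact le_antisymm (not_lt.1 (key s' hs' s hs h.symm)) (not_lt.1 (key s hs s' hs' h))
  have h1 : (T \ F).card ≤ t := by
    have := Finset.card_le_card_of_injOn g (t := Finset.univ) (fun _ _ => Finset.mem_univ _) hinj
    simpa using this
  have h2 := Finset.le_card_sdiff F T
  omega

/-- For coprime `1 ≤ l < k` with `k ≥ 2`, there exist `k`
step-function probability measures on `[0,1]` such that whenever `A ⊆ [0,1]` is a union
of `t` intervals (= order-connected subsets of `[0,1]`) on which every measure takes
value exactly `l/k`, we must have `t ≥ k − 1`. -/
theorem icd_single_copy_lower_bound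
    (l k : ℕ) (hl : 1 ≤ l) (hlk : l < k) (hk : 2 ≤ k) (hcop : Nat.Coprime l k) :
    ∃ μ : Fin k → Measure ℝ, (∀ i, IsStepMeasure (μ i)) ∧
      ∀ (t : ℕ) (I : Fin t → Set ℝ) (A : Set ℝ),
        (∀ j, I j ⊆ Set.Icc (0 : ℝ) 1 ∧ (I j).OrdConnected) →
        A = ⋃ j, I j →
        (∀ i, μ i A = ENNReal.ofReal ((l : ℝ) / (k : ℝ))) →
        k - 1 ≤ t := by
  classical
  obtain ⟨p, rfl⟩ : ∃ p, k = p + 1 := ⟨k - 1, by omega⟩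
  have hp : 0 < p := by omega
  -- `m` is a negative inverse of `l` modulo `k`: with `l * y ≡ 1`, take `m = y * (k - 1)`.
  obtain ⟨m, q, hm, hmq⟩ : ∃ m q : ℕ, 0 < m ∧ l * m + 1 = q * (p + 1) := by
    obtain ⟨y, hy⟩ := Nat.exists_mul_mod_eq_one_of_coprime hcop (by omega)
    have hy0 : 0 < y := by
      rcases Nat.eq_zero_or_pos y with h | h
      · simp [h] at hy
      · exact h
    have hdiv := Nat.div_add_mod (l * y) (p + 1)
    rw [hy.2] at hdiv
    generalize l * y / (p + 1) = d at hdiv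
    refine ⟨y * p, d * p + 1, by positivity, ?_⟩
    rw [← mul_assoc, ← hdiv]
    ring
  have hN : 0 < m * p := by positivity
  have hM : 0 < 2 * (m * p) := by positivity
  refine ⟨Fin.lastCases (cellMeasure (2 * (m * p)) (m * p) fun s => 2 * s + 1)
    (fun i => cellMeasure (2 * (m * p)) m fun r => 2 * (finProdFinEquiv (r, i) : Fin (m * p))),
    ?_, ?_⟩
  · intro i
    refine Fin.lastCases ?_ (fun i => ?_) i
    · simp only [Fin.lastCases_last]
      exact isStepMeasure_cellMeasure hM hN _ fun s => by omega
    · simp only [Fin.lastCases_castSucc]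
      exact isStepMeasure_cellMeasure hM hm _ fun r => by omega
  · intro t I A hI hA hμ
    have hAm : MeasurableSet A := by
      rw [hA]
      exact MeasurableSet.iUnion fun j => (hI j).2.measurableSet
    have hmeet := hμ (Fin.last p)
    simp only [Fin.lastCases_last] at hmeet
    have hT := le_card_meet hM hN _ hAm hmeet
    have hF : ∀ i : Fin p, (∑ r : Fin m, if cell (2 * (m * p))
        (2 * (finProdFinEquiv (r, i) : Fin (m * p))) ⊆ A then 1 else 0 : ℕ) + 1 ≤ q := by
      intro i
      have hi := hμ i.castSucc
      simp only [Fin.lastCases_castSucc] at hi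
      have h := card_subset_le hM hm _ hAm (by positivity) hi
      rw [← mul_div_assoc, le_div_iff₀ (by positivity)] at h
      have h' := (by exact_mod_cast h : _ * (p + 1) ≤ m * l)
      have : _ * (p + 1) < q * (p + 1) := lt_of_le_of_lt h' (by linarith)
      exact Nat.lt_of_mul_lt_mul_right this
    have hsum : (∑ s : Fin (m * p), if cell (2 * (m * p)) (2 * s) ⊆ A then 1 else 0 : ℕ) + p
        ≤ p * q := by
      rw [← Equiv.sum_comp finProdFinEquiv, Fintype.sum_prod_type, Finset.sum_comm]
      have := Finset.sum_le_sum fun i (_ : i ∈ (Finset.univ : Finset (Fin p))) => hF i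
      simpa [Finset.sum_add_distrib] using this
    have hcard := card_meet_le (2 * (m * p)) (m * p) t I fun j => (hI j).2
    rw [← hA] at hcard
    rw [← mul_div_assoc, div_le_iff₀ (by positivity)] at hT
    have hT' := (by exact_mod_cast hT : m * p * l ≤ _ * (p + 1))
    have h1 := hT'.trans (Nat.mul_le_mul_right (p + 1) hcard)
    generalize (∑ s : Fin (m * p), if cell (2 * (m * p)) (2 * s) ⊆ A then 1 else 0 : ℕ) = f
      at hsum h1
    by_contra hlt
    have ht : t + 1 ≤ p := by omega
    -- Otherwise `p (q k - 1) ≤ k ((q - 1) p + (p - 1))`, i.e. `p² ≤ (p + 1) (p - 1) = p² - 1`.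
    have h2 : f + t + 1 ≤ p * q := by omega
    have h3 := Nat.mul_le_mul_right (p + 1) h2
    have h4 : p * (l * m + 1) = p * (q * (p + 1)) := by rw [hmq]
    nlinarith
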